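/- arXiv:math/0510500 — 2 statements merged into one kernel-verified Lean document; each statement's English description precedes it below -/
import Mathlib

section
/- Let r ≥ 2 be a natural number, let w : Fin (r-2) → (Fin r → ℝ) be a tuple of r−2 vectors in ℝ^r, and for x, y ∈ (Fin r → ℝ) write [x y] for the determinant of the r×r real matrix whose first r−2 columns are w 0, …, w (r−3) and whose last two columns are x and y. Then for all vectors a, b, c, d ∈ (Fin r → ℝ): [a b]·[c d] − [a c]·[b d] + [a d]·[b c] = 0. -/
/-- The bracket `[x y]`: the determinant of the `r × r` real matrix whose first
`r - 2` columns are `w 0, …, w (r-3)` and whose last two columns are `x` and `y`. -/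
noncomputable def bracket (r : ℕ) (w : Fin (r - 2) → (Fin r → ℝ)) (x y : Fin r → ℝ) : ℝ :=
  Matrix.det (Matrix.of fun i j : Fin r =>
    if h : (j : ℕ) < r - 2 then w ⟨j, h⟩ i
    else if (j : ℕ) = r - 2 then x i else y i)

/-- The matrix underlying the bracket. -/
def gpMat (n : ℕ) (w : Fin n → (Fin (n + 2) → ℝ)) (x y : Fin (n + 2) → ℝ) :
    Matrix (Fin (n + 2)) (Fin (n + 2)) ℝ :=
  Matrix.of fun i j => if h : (j : ℕ) < n then w ⟨j, h⟩ i
    else if (j : ℕ) = n then x i else y i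

theorem gpMat_bracket (n : ℕ) (w : Fin n → (Fin (n + 2) → ℝ)) (x y : Fin (n + 2) → ℝ) :
    bracket (n + 2) w x y = (gpMat n w x y).det := rfl

theorem gpMat_upd1 (n : ℕ) (w : Fin n → (Fin (n + 2) → ℝ)) (x y z : Fin (n + 2) → ℝ) :
    (gpMat n w x y).updateCol (Fin.last n).castSucc z = gpMat n w z y := by
  ext i j
  rw [Matrix.updateCol_apply]
  split_ifs with h
  · subst h; simp [gpMat]
  · have : (j : ℕ) ≠ n := fun h' => h (Fin.ext (by simpa using h'))
    simp [gpMat, this]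

theorem gpMat_upd2 (n : ℕ) (w : Fin n → (Fin (n + 2) → ℝ)) (x y z : Fin (n + 2) → ℝ) :
    (gpMat n w x y).updateCol (Fin.last (n + 1)) z = gpMat n w x z := by
  ext i j
  rw [Matrix.updateCol_apply]
  split_ifs with h
  · subst h; simp [gpMat]
  · have h1 : (j : ℕ) ≠ n + 1 := fun h' => h (Fin.ext (by simpa using h'))
    have h2 : (j : ℕ) < n ∨ (j : ℕ) = n := by omega
    rcases h2 with h2 | h2 <;> simp [gpMat, h2]

theorem gpMat_swap (n : ℕ) (w : Fin n → (Fin (n + 2) → ℝ)) (x y : Fin (n + 2) → ℝ) :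
    (gpMat n w x y).det = - (gpMat n w y x).det := by
  have hne : (Fin.last n).castSucc ≠ Fin.last (n + 1) := by
    intro h; simpa using congrArg Fin.val h
  have h := Matrix.det_permute' (Equiv.swap (Fin.last n).castSucc (Fin.last (n + 1)))
    (gpMat n w y x)
  rw [Equiv.Perm.sign_swap hne] at h
  have e : (gpMat n w y x).submatrix id (Equiv.swap (Fin.last n).castSucc (Fin.last (n + 1)))
      = gpMat n w x y := by
    ext i j
    rw [Matrix.submatrix_apply, Equiv.swap_apply_def]
    split_ifs with h1 h2
    · subst h1; simp [gpMat]
    · subst h2; simp [gpMat]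
    · have h3 : (j : ℕ) ≠ n := fun h' => h1 (Fin.ext (by simpa using h'))
      have h4 : (j : ℕ) ≠ n + 1 := fun h' => h2 (Fin.ext (by simpa using h'))
      have h5 : (j : ℕ) < n := by omega
      simp [gpMat, h5]
  rw [e] at h
  simpa using h

theorem gpMat_zero (n : ℕ) (w : Fin n → (Fin (n + 2) → ℝ)) (y : Fin (n + 2) → ℝ) (k : Fin n) :
    (gpMat n w (w k) y).det = 0 := by
  have hne : k.castSucc.castSucc ≠ (Fin.last n).castSucc := by
    intro h
    have := congrArg Fin.val h
    simp at this
    omega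
  refine Matrix.det_zero_of_column_eq hne ?_
  intro i
  simp [gpMat]

theorem gpMat_rel (n : ℕ) (w : Fin n → (Fin (n + 2) → ℝ)) (a b c d : Fin (n + 2) → ℝ) :
    (gpMat n w a b).det * (gpMat n w c d).det =
      (gpMat n w c b).det * (gpMat n w a d).det + (gpMat n w a c).det * (gpMat n w b d).det := by
  have hL : ∀ x, Matrix.cramer (gpMat n w 0 d) x (Fin.last n).castSucc = (gpMat n w x d).det := by
    intro x
    rw [Matrix.cramer_apply, gpMat_upd1]
  have h := Matrix.mulVec_cramer (gpMat n w a b) c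
  have h0 : (gpMat n w a b).mulVec ((gpMat n w a b).cramer c) =
      ∑ j, (gpMat n w a b).cramer c j • (gpMat n w a b).col j := by
    ext i
    simp [Matrix.mulVec, dotProduct, mul_comm]
  rw [h0] at h
  have h2 := congrArg (fun v => Matrix.cramer (gpMat n w 0 d) v (Fin.last n).castSucc) h
  simp only [map_sum, map_smul, Finset.sum_apply, Pi.smul_apply, smul_eq_mul] at h2
  simp only [hL] at h2
  rw [Fin.sum_univ_castSucc, Fin.sum_univ_castSucc] at h2
  have c1 : ∀ k : Fin n, (gpMat n w a b).col k.castSucc.castSucc = w k := by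
    intro k; ext i; simp [gpMat]
  have c2 : (gpMat n w a b).col (Fin.last n).castSucc = a := by
    ext i; simp [gpMat]
  have c3 : (gpMat n w a b).col (Fin.last (n + 1)) = b := by
    ext i; simp [gpMat]
  simp only [c1, c2, c3, gpMat_zero, mul_zero, Finset.sum_const_zero, zero_add,
    Matrix.cramer_apply, gpMat_upd1, gpMat_upd2] at h2
  exact h2.symm

/-- Three-term Grassmann–Plücker relation for real point configurations. -/
theorem grassmann_pluecker (r : ℕ) (hr : 2 ≤ r) (w : Fin (r - 2) → (Fin r → ℝ))
    (a b c d : Fin r → ℝ) :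
    bracket r w a b * bracket r w c d - bracket r w a c * bracket r w b d
      + bracket r w a d * bracket r w b c = 0 := by
  obtain ⟨n, rfl⟩ : ∃ n, r = n + 2 := ⟨r - 2, by omega⟩
  change Fin n → (Fin (n + 2) → ℝ) at w
  have h := gpMat_rel n w a b c d
  rw [gpMat_swap n w c b] at h
  simp only [gpMat_bracket]
  linarith
end

section
/- Let r ≥ 2, let w : Fin (r-2) → (Fin r → ℝ), and for x, y ∈ (Fin r → ℝ) write [x y] for the determinant of the r×r real matrix whose first r−2 columns are w 0, …, w (r−3) and last two columns are x and y. Let a, b, c, d ∈ (Fin r → ℝ) and suppose [a b]·[c d] ≥ 0 and [a d]·[b c] ≥ 0. Then [a b]·[c d] ≤ [a c]·[b d] and [a d]·[b c] ≤ [a c]·[b d]. -/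
def bmat (r : ℕ) (w : Fin (r - 2) → (Fin r → ℝ)) (x y : Fin r → ℝ) : Matrix (Fin r) (Fin r) ℝ :=
  Matrix.of fun i j : Fin r =>
    if h : (j : ℕ) < r - 2 then w ⟨j, h⟩ i
    else if (j : ℕ) = r - 2 then x i else y i

theorem bracket_eq (r : ℕ) (w : Fin (r - 2) → (Fin r → ℝ)) (x y : Fin r → ℝ) :
    bracket r w x y = (bmat r w x y).det := rfl

theorem cramer_fst (n : ℕ) (w : Fin (n + 2 - 2) → (Fin (n + 2) → ℝ)) (a b c : Fin (n + 2) → ℝ) :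
    Matrix.cramer (bmat (n + 2) w a b) c (Fin.last n).castSucc = bracket (n + 2) w c b := by
  rw [Matrix.cramer_apply, bracket_eq]
  congr 1
  ext i j
  simp only [Matrix.updateCol_apply, bmat, Matrix.of_apply, Fin.ext_iff, Fin.val_castSucc,
    Fin.val_last]
  split_ifs <;> first | rfl | omega

theorem cramer_snd (n : ℕ) (w : Fin (n + 2 - 2) → (Fin (n + 2) → ℝ)) (a b c : Fin (n + 2) → ℝ) :
    Matrix.cramer (bmat (n + 2) w a b) c (Fin.last (n + 1)) = bracket (n + 2) w a c := by
  rw [Matrix.cramer_apply, bracket_eq]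
  congr 1
  ext i j
  have := j.2
  simp only [Matrix.updateCol_apply, bmat, Matrix.of_apply, Fin.ext_iff, Fin.val_last]
  split_ifs <;> first | rfl | omega

theorem bracket_self (n : ℕ) (w : Fin (n + 2 - 2) → (Fin (n + 2) → ℝ)) (a : Fin (n + 2) → ℝ) :
    bracket (n + 2) w a a = 0 := by
  rw [bracket_eq]
  refine Matrix.det_zero_of_column_eq (i := (Fin.last n).castSucc) (j := Fin.last (n + 1)) ?_ ?_
  · simp [Fin.ext_iff]
  · intro k
    simp [bmat]

theorem bracket_w (n : ℕ) (w : Fin (n + 2 - 2) → (Fin (n + 2) → ℝ)) (d : Fin (n + 2) → ℝ)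
    (k : Fin n) : bracket (n + 2) w (w k) d = 0 := by
  rw [bracket_eq]
  refine Matrix.det_zero_of_column_eq (i := (Fin.last n).castSucc) (j := k.castSucc.castSucc) ?_ ?_
  · have := k.2
    simp only [ne_eq, Fin.ext_iff, Fin.val_castSucc, Fin.val_last]
    omega
  · intro i
    simp [bmat]

theorem bracket_add_left (n : ℕ) (w : Fin (n + 2 - 2) → (Fin (n + 2) → ℝ))
    (a b c : Fin (n + 2) → ℝ) :
    bracket (n + 2) w (a + b) c = bracket (n + 2) w a c + bracket (n + 2) w b c := by
  simp only [← cramer_fst n w 0 c, map_add, Pi.add_apply]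

theorem bracket_add_right (n : ℕ) (w : Fin (n + 2 - 2) → (Fin (n + 2) → ℝ))
    (a b c : Fin (n + 2) → ℝ) :
    bracket (n + 2) w c (a + b) = bracket (n + 2) w c a + bracket (n + 2) w c b := by
  simp only [← cramer_snd n w c 0, map_add, Pi.add_apply]

theorem bracket_swap (n : ℕ) (w : Fin (n + 2 - 2) → (Fin (n + 2) → ℝ)) (a b : Fin (n + 2) → ℝ) :
    bracket (n + 2) w b a = - bracket (n + 2) w a b := by
  have h := bracket_self n w (a + b)
  rw [bracket_add_left, bracket_add_right, bracket_add_right, bracket_self, bracket_self] at h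
  linarith

theorem bracket_gp (n : ℕ) (w : Fin (n + 2 - 2) → (Fin (n + 2) → ℝ))
    (a b c d : Fin (n + 2) → ℝ) :
    bracket (n + 2) w a b * bracket (n + 2) w c d =
      bracket (n + 2) w c b * bracket (n + 2) w a d
        + bracket (n + 2) w a c * bracket (n + 2) w b d := by
  have h := Matrix.mulVec_cramer (bmat (n + 2) w a b) c
  have e : Matrix.mulVec (bmat (n + 2) w a b) (Matrix.cramer (bmat (n + 2) w a b) c) =
      (∑ k : Fin n, Matrix.cramer (bmat (n + 2) w a b) c k.castSucc.castSucc • w k)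
        + bracket (n + 2) w c b • a + bracket (n + 2) w a c • b := by
    ext i
    rw [Matrix.mulVec, dotProduct, Fin.sum_univ_castSucc, Fin.sum_univ_castSucc, cramer_fst,
      cramer_snd]
    simp [bmat, mul_comm]
  rw [e] at h
  have h2 := congrArg (fun x => Matrix.cramer (bmat (n + 2) w 0 d) x (Fin.last n).castSucc) h
  simp only [map_add, map_sum, map_smul, Pi.add_apply, Finset.sum_apply, Pi.smul_apply] at h2
  simp only [cramer_fst, bracket_w, smul_eq_mul, mul_zero, Finset.sum_const_zero, zero_add,
    ← bracket_eq] at h2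
  exact h2.symm

/-- Normalized pairs satisfy the non-strict biquadratic inequalities. -/
theorem biquadratic_inequalities (r : ℕ) (hr : 2 ≤ r) (w : Fin (r - 2) → (Fin r → ℝ))
    (a b c d : Fin r → ℝ)
    (hAB : bracket r w a b * bracket r w c d ≥ 0)
    (hEF : bracket r w a d * bracket r w b c ≥ 0) :
    bracket r w a b * bracket r w c d ≤ bracket r w a c * bracket r w b d ∧
      bracket r w a d * bracket r w b c ≤ bracket r w a c * bracket r w b d := by
  obtain ⟨n, rfl⟩ : ∃ n, r = n + 2 := ⟨r - 2, by omega⟩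
  have h := bracket_gp n w a b c d
  rw [bracket_swap n w b c] at h
  constructor <;> linarith
end
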